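/- Fix ε ∈ (0, 1/2). Let a(n) be such that vol{x ∈ [0,1]^n : Σ x_i ≤ a(n)} = ε, define A_n = {x ∈ [0,1]^n : Σ x_i ≤ a(n)} and B_n = {x ∈ [0,1]^n : Σ x_i ≥ n - a(n)}. Then dist(A_n, B_n) = (n - 2a(n))/√n, and this quantity converges as n → ∞ to -2σ Φ⁻¹(ε) where σ = 1/√12; in particular dist(A_n, B_n) is bounded by a constant depending only on ε. -/

import Mathlib

open MeasureTheory Filter Real

/-- The infimum of distances between points of `A` and points of `B`. -/
noncomputable def setDist {n : ℕ} (A B : Set (EuclideanSpace ℝ (Fin n))) : ℝ :=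
  sInf {d | ∃ x ∈ A, ∃ y ∈ B, d = dist x y}

/-- The standard normal cumulative distribution function. -/
noncomputable def stdNormalCDF (t : ℝ) : ℝ :=
  (Real.sqrt (2 * π))⁻¹ * ∫ s in Set.Iic t, Real.exp (-s ^ 2 / 2)

/-- The corner simplex of the cube. -/
def cornerA (n : ℕ) (c : ℝ) : Set (EuclideanSpace ℝ (Fin n)) :=
  {x | (∀ i, x i ∈ Set.Icc (0 : ℝ) 1) ∧ ∑ i, x i ≤ c}

/-- The opposite corner simplex of the cube. -/
def cornerB (n : ℕ) (c : ℝ) : Set (EuclideanSpace ℝ (Fin n)) :=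
  {x | (∀ i, x i ∈ Set.Icc (0 : ℝ) 1) ∧ (n : ℝ) - c ≤ ∑ i, x i}

/-!
A point of `Aₙ` and a point of `Bₙ` have coordinate sums differing by at least `n - 2 a(n)`, so
Cauchy–Schwarz against the all-ones vector bounds their distance below by `(n - 2 a(n)) / √n`, and
two points of the main diagonal attain this bound. On the other hand `vol Aₙ` is the probability
that `n` independent uniform variables have sum at most `a(n)`; by the central limit theorem
`(a(n) - n / 2) / √n` therefore converges to the `ε`-quantile of the centered normal law of
variance `1 / 12`, which is `σ Φ⁻¹(ε)`.
-/

open ProbabilityTheory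
open scoped Topology NNReal

section Order

variable {ι α β : Type*} [LinearOrder α] [TopologicalSpace α] [OrderTopology α]
  [LinearOrder β] [TopologicalSpace β] [OrderClosedTopology β]

lemma tendsto_of_tendsto_of_monotone_of_strictMono {l : Filter ι} {F : ι → α → β} {G : α → β}
    {u : ι → α} {b : α} (hF : ∀ i, Monotone (F i)) (hG : StrictMono G)
    (hFG : ∀ t, Tendsto (fun i => F i t) l (𝓝 (G t)))
    (hu : Tendsto (fun i => F i (u i)) l (𝓝 (G b))) : Tendsto u l (𝓝 b) := by
  refine tendsto_order.2 ⟨fun t ht => ?_, fun t ht => ?_⟩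
  · filter_upwards [(hFG t).eventually_lt hu (hG ht)] with i hi using (hF i).reflect_lt hi
  · filter_upwards [hu.eventually_lt (hFG t) (hG ht)] with i hi using (hF i).reflect_lt hi

end Order

section Measure

lemma strictMono_measure_Iic {α : Type*} [LinearOrder α] [DenselyOrdered α] [TopologicalSpace α]
    [OrderClosedTopology α] [MeasurableSpace α] [OpensMeasurableSpace α] (μ : Measure α)
    [IsFiniteMeasure μ] [μ.IsOpenPosMeasure] : StrictMono fun t => μ (Set.Iic t) := by
  intro s t hst
  have hIoc : μ (Set.Ioc s t) ≠ 0 :=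
    ((isOpen_Ioo.measure_pos μ (Set.nonempty_Ioo.2 hst)).trans_le
      (measure_mono Set.Ioo_subset_Ioc_self)).ne'
  calc μ (Set.Iic s) < μ (Set.Iic s) + μ (Set.Ioc s t) :=
        ENNReal.lt_add_right (measure_ne_top _ _) hIoc
    _ = μ (Set.Iic t) := by
        rw [← measure_union (Set.Iic_disjoint_Ioc le_rfl) measurableSet_Ioc,
          Set.Iic_union_Ioc_eq_Iic hst.le]

lemma measurePreserving_infinitePi_fin {α : Type*} [MeasurableSpace α] (μ : Measure α)
    [IsProbabilityMeasure μ] (n : ℕ) :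
    MeasurePreserving (fun (ω : ℕ → α) (i : Fin n) => ω i) (Measure.infinitePi fun _ => μ)
      (Measure.pi fun _ => μ) where
  measurable := by fun_prop
  map_eq := by
    rw [Measure.map_infinitePi_infinitePi_of_inj (P := fun _ : ℕ => μ) Fin.val_injective,
      Measure.infinitePi_eq_pi]

lemma volume_setOf_forall_mem_and_ofLp_mem {ι : Type*} [Fintype ι] (s : ι → Set ℝ)
    (hs : ∀ i, MeasurableSet (s i)) {t : Set (ι → ℝ)} (ht : MeasurableSet t) :
    volume {x : EuclideanSpace ℝ ι | (∀ i, x i ∈ s i) ∧ WithLp.ofLp x ∈ t}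
      = Measure.pi (fun i => volume.restrict (s i)) t := by
  have hpre : {x : EuclideanSpace ℝ ι | (∀ i, x i ∈ s i) ∧ WithLp.ofLp x ∈ t}
      = WithLp.ofLp ⁻¹' (t ∩ Set.univ.pi s) := by
    ext x
    simp [and_comm]
  rw [hpre, (PiLp.volume_preserving_ofLp ι).measure_preimage
    (ht.inter (.univ_pi hs)).nullMeasurableSet, ← Measure.restrict_apply ht, volume_pi,
    Measure.restrict_pi_pi]

end Measure

section Gaussian

lemma isOpenPosMeasure_gaussianReal (m : ℝ) {v : ℝ≥0} (hv : v ≠ 0) :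
    (gaussianReal m v).IsOpenPosMeasure :=
  (gaussianReal_absolutelyContinuous' m hv).isOpenPosMeasure

lemma gaussianReal_zero_one_Iic (t : ℝ) :
    gaussianReal 0 1 (Set.Iic t) = ENNReal.ofReal (stdNormalCDF t) := by
  rw [gaussianReal_apply_eq_integral _ one_ne_zero]
  simp [gaussianPDFReal, stdNormalCDF, integral_const_mul]

lemma gaussianReal_Iic_add_sqrt_mul (m : ℝ) {v : ℝ≥0} (hv : v ≠ 0) (t : ℝ) :
    gaussianReal m v (Set.Iic (m + √v * t)) = ENNReal.ofReal (stdNormalCDF t) := by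
  have hv' : 0 < √(v : ℝ) := Real.sqrt_pos.2 (by positivity)
  have hmap : gaussianReal m v = ((gaussianReal 0 1).map (√v * ·)).map (m + ·) := by
    rw [gaussianReal_map_const_mul, gaussianReal_map_const_add]
    congr 1
    · simp
    · ext; simp
  rw [← gaussianReal_zero_one_Iic, hmap, Measure.map_apply (by fun_prop) measurableSet_Iic,
    Measure.map_apply (by fun_prop) (by measurability)]
  congr 1
  ext x
  simp [mul_le_mul_iff_right₀ hv']

lemma tendsto_pi_setOf_inv_sqrt_mul_sum_sub_le {μ : Measure ℝ} [IsProbabilityMeasure μ]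
    (hμ : Var[id; μ] ≠ 0) (t : ℝ) :
    Tendsto (fun n : ℕ => Measure.pi (fun _ : Fin n => μ)
        {x | (√n)⁻¹ * (∑ i, x i - n * μ[id]) ≤ t}) atTop
      (𝓝 (gaussianReal 0 Var[id; μ].toNNReal (Set.Iic t))) := by
  have heval (i : ℕ) := measurePreserving_eval_infinitePi (fun _ : ℕ => μ) i
  have hlaw (i : ℕ) : IdentDistrib (fun ω : ℕ → ℝ => ω i) id (Measure.infinitePi fun _ => μ) μ :=
    ⟨(heval i).aemeasurable, aemeasurable_id, by rw [Measure.map_id]; exact (heval i).map_eq⟩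
  have hclt := tendstoInDistribution_inv_sqrt_mul_sum_sub (P := Measure.infinitePi fun _ => μ)
    (X := fun i ω => ω i) (P' := gaussianReal 0 Var[id; μ].toNNReal) (Y := id)
    (by rw [(hlaw 0).variance_eq]; exact .id)
    ((hlaw 0).memLp_iff.2 (memLp_two_of_variance_ne_zero aestronglyMeasurable_id hμ))
    (iIndepFun_infinitePi fun _ => measurable_id) fun i => (hlaw i).trans (hlaw 0).symm
  have hfrontier : gaussianReal 0 Var[id; μ].toNNReal (frontier (Set.Iic t)) = 0 := by
    have := nullSingletonClass_gaussianReal (μ := 0) (v := Var[id; μ].toNNReal)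
      (by simpa using (variance_nonneg id μ).lt_of_ne' hμ)
    rw [frontier_Iic, measure_singleton]
  have hIic := ProbabilityMeasure.tendsto_measure_of_null_frontier_of_tendsto' hclt.tendsto
    (E := Set.Iic t) (by simpa using hfrontier)
  simp only [ProbabilityMeasure.coe_mk, Measure.map_id] at hIic
  refine hIic.congr fun n => ?_
  rw [Measure.map_apply (by fun_prop) measurableSet_Iic,
    ← (measurePreserving_infinitePi_fin μ n).measure_preimage
      (measurableSet_le (by fun_prop) (by fun_prop)).nullMeasurableSet, (hlaw 0).integral_eq]
  simp [Finset.sum_range, Set.preimage]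

end Gaussian

section Uniform

/-- The uniform distribution on `[0, 1]`, as a measure on `ℝ`: the law of each coordinate of a
uniformly random point of the cube. -/
noncomputable def uniform01 : Measure ℝ := volume.restrict (Set.Icc 0 1)

instance : IsProbabilityMeasure uniform01 := ⟨by simp [uniform01]⟩

lemma integral_uniform01 (f : ℝ → ℝ) : ∫ x, f x ∂uniform01 = ∫ x in (0 : ℝ)..1, f x := by
  rw [uniform01, integral_Icc_eq_integral_Ioc, intervalIntegral.integral_of_le zero_le_one]

lemma integral_id_uniform01 : uniform01[id] = 1 / 2 := by
  simp [integral_uniform01]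

lemma variance_id_uniform01 : Var[id; uniform01] = 1 / 12 := by
  rw [variance_eq_integral aemeasurable_id, integral_id_uniform01, integral_uniform01]
  simp only [id, intervalIntegral.integral_comp_sub_right (fun x => x ^ 2), integral_pow]
  norm_num

end Uniform

section CornerVolume

variable {n : ℕ} {c : ℝ}

lemma volume_cornerA (n : ℕ) (c : ℝ) :
    volume (cornerA n c) = Measure.pi (fun _ : Fin n => uniform01) {x | ∑ i, x i ≤ c} :=
  volume_setOf_forall_mem_and_ofLp_mem _ (fun _ => measurableSet_Icc)
    (measurableSet_le (f := fun x : Fin n → ℝ => ∑ i, x i) (by fun_prop) measurable_const)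

lemma volume_cornerB (n : ℕ) (c : ℝ) :
    volume (cornerB n c) = Measure.pi (fun _ : Fin n => uniform01) {x | n - c ≤ ∑ i, x i} :=
  volume_setOf_forall_mem_and_ofLp_mem _ (fun _ => measurableSet_Icc)
    (measurableSet_le (g := fun x : Fin n → ℝ => ∑ i, x i) measurable_const (by fun_prop))

lemma mem_cornerB_iff_sub_mem_cornerA {x : EuclideanSpace ℝ (Fin n)} :
    x ∈ cornerB n c ↔ WithLp.toLp 2 (Function.const (Fin n) 1) - x ∈ cornerA n c := by
  simp [cornerA, cornerB, and_comm, add_comm]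

lemma volume_cornerB_eq_volume_cornerA (n : ℕ) (c : ℝ) :
    volume (cornerB n c) = volume (cornerA n c) := by
  rw [← (volume.measurePreserving_sub_left (WithLp.toLp 2 (Function.const (Fin n) 1))
    ).measure_preimage_emb (MeasurableEquiv.subLeft _).measurableEmbedding (cornerA n c)]
  congr 1
  ext x
  exact mem_cornerB_iff_sub_mem_cornerA

lemma one_le_two_mul_volume_cornerA (h : n ≤ 2 * c) : 1 ≤ 2 * volume (cornerA n c) := by
  set P := Measure.pi fun _ : Fin n => uniform01
  calc 1 = P Set.univ := measure_univ.symm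
    _ ≤ P ({x | ∑ i, x i ≤ c} ∪ {x | n - c ≤ ∑ i, x i}) := by
        refine measure_mono fun x _ => (le_total (∑ i, x i) c).imp id fun hx => ?_
        exact (show (n : ℝ) - c ≤ c by linarith).trans hx
    _ ≤ volume (cornerA n c) + volume (cornerB n c) := by
        rw [volume_cornerA, volume_cornerB]
        exact measure_union_le _ _
    _ = 2 * volume (cornerA n c) := by rw [volume_cornerB_eq_volume_cornerA, two_mul]

lemma cornerA_mono (n : ℕ) : Monotone (cornerA n) :=
  fun _ _ h _ hx => ⟨hx.1, hx.2.trans h⟩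

lemma nonneg_of_cornerA_nonempty (h : (cornerA n c).Nonempty) : 0 ≤ c := by
  obtain ⟨x, hx, hsum⟩ := h
  exact (Finset.sum_nonneg fun i _ => (hx i).1).trans hsum

end CornerVolume

section Distance

lemma setDist_eq_dist {n : ℕ} {A B : Set (EuclideanSpace ℝ (Fin n))}
    {x y : EuclideanSpace ℝ (Fin n)} (hx : x ∈ A) (hy : y ∈ B)
    (h : ∀ x' ∈ A, ∀ y' ∈ B, dist x y ≤ dist x' y') : setDist A B = dist x y := by
  refine IsLeast.csInf_eq ⟨⟨x, hx, y, hy, rfl⟩, ?_⟩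
  rintro _ ⟨x', hx', y', hy', rfl⟩
  exact h x' hx' y' hy'

lemma sum_sub_le_sqrt_card_mul_dist {ι : Type*} [Fintype ι] (x y : EuclideanSpace ℝ ι) :
    ∑ i, y i - ∑ i, x i ≤ √(Fintype.card ι) * dist x y := by
  have hcs := real_inner_le_norm (WithLp.toLp 2 (Function.const ι (1 : ℝ))) (y - x)
  rw [PiLp.norm_toLp_const (by simp), ← dist_eq_norm, dist_comm] at hcs
  simpa [PiLp.inner_apply, Real.sqrt_eq_rpow] using hcs

lemma dist_toLp_const {ι : Type*} [Fintype ι] (s t : ℝ) :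
    dist (WithLp.toLp 2 (Function.const ι s)) (WithLp.toLp 2 (Function.const ι t))
      = √(Fintype.card ι) * |s - t| := by
  rw [EuclideanSpace.dist_eq]
  simp [Real.dist_eq, Real.sqrt_sq_eq_abs]

variable {n : ℕ} {c : ℝ}

lemma sub_div_sqrt_le_dist {x y : EuclideanSpace ℝ (Fin n)} (hx : x ∈ cornerA n c)
    (hy : y ∈ cornerB n c) : (n - 2 * c) / √n ≤ dist x y := by
  refine div_le_of_le_mul₀ (Real.sqrt_nonneg _) dist_nonneg ?_
  have h := sum_sub_le_sqrt_card_mul_dist x y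
  rw [Fintype.card_fin] at h
  linarith [hx.2, hy.2]

lemma toLp_const_div_mem_cornerA (hc₀ : 0 ≤ c) (hcn : c ≤ n) :
    WithLp.toLp 2 (Function.const (Fin n) (c / n)) ∈ cornerA n c := by
  refine ⟨fun _ => ⟨div_nonneg hc₀ n.cast_nonneg, div_le_one_of_le₀ hcn n.cast_nonneg⟩, ?_⟩
  simpa [mul_div_left_comm] using mul_le_of_le_one_right hc₀ (div_self_le_one (n : ℝ))

lemma toLp_const_one_sub_div_mem_cornerB (hc₀ : 0 ≤ c) (hcn : c ≤ n) :
    WithLp.toLp 2 (Function.const (Fin n) (1 - c / n)) ∈ cornerB n c := by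
  refine mem_cornerB_iff_sub_mem_cornerA.2 ?_
  convert toLp_const_div_mem_cornerA hc₀ hcn using 1
  ext i
  simp

lemma setDist_cornerA_cornerB (hA : (cornerA n c).Nonempty) (hc : 2 * c ≤ n) :
    setDist (cornerA n c) (cornerB n c) = (n - 2 * c) / √n := by
  have hc₀ := nonneg_of_cornerA_nonempty hA
  have hcn : c / n ≤ 1 / 2 := div_le_of_le_mul₀ n.cast_nonneg (by norm_num) (by linarith)
  have hdist : dist (WithLp.toLp 2 (Function.const (Fin n) (c / n)))
      (WithLp.toLp 2 (Function.const (Fin n) (1 - c / n))) = (n - 2 * c) / √n := by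
    rw [dist_toLp_const, Fintype.card_fin, abs_of_nonpos (by linarith)]
    rcases n.eq_zero_or_pos with rfl | hn
    · simp
    · rw [eq_div_iff (by positivity), mul_right_comm, Real.mul_self_sqrt n.cast_nonneg]
      field_simp
      ring
  rw [← hdist]
  exact setDist_eq_dist (toLp_const_div_mem_cornerA hc₀ (by linarith))
    (toLp_const_one_sub_div_mem_cornerB hc₀ (by linarith))
    fun x hx y hy => hdist.trans_le (sub_div_sqrt_le_dist hx hy)

end Distance

section Limit

lemma tendsto_volume_cornerA (t : ℝ) :
    Tendsto (fun n : ℕ => volume (cornerA n (n / 2 + t * √n))) atTop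
      (𝓝 (gaussianReal 0 (1 / 12) (Set.Iic t))) := by
  have hclt := tendsto_pi_setOf_inv_sqrt_mul_sum_sub_le (μ := uniform01)
    (by rw [variance_id_uniform01]; norm_num) t
  rw [variance_id_uniform01, integral_id_uniform01] at hclt
  have hv : (1 / 12 : ℝ).toNNReal = 1 / 12 := by ext; simp
  rw [hv] at hclt
  refine hclt.congr' ?_
  filter_upwards [eventually_ge_atTop 1] with n hn
  rw [volume_cornerA]
  congr 1
  ext x
  simp only [Set.mem_ofPred_eq]
  rw [inv_mul_le_iff₀ (by positivity), sub_le_iff_le_add', mul_comm t, mul_one_div]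

lemma tendsto_sub_two_mul_div_sqrt {a : ℕ → ℝ} {b : ℝ}
    (ha : Tendsto (fun n => volume (cornerA n (a n))) atTop
      (𝓝 (ENNReal.ofReal (stdNormalCDF b)))) :
    Tendsto (fun n : ℕ => (n - 2 * a n) / √n) atTop (𝓝 (-2 * (1 / √12) * b)) := by
  have hquantile :
      gaussianReal 0 (1 / 12) (Set.Iic (1 / √12 * b)) = ENNReal.ofReal (stdNormalCDF b) := by
    simpa using gaussianReal_Iic_add_sqrt_mul 0 (v := 1 / 12) (by norm_num) b
  have := isOpenPosMeasure_gaussianReal 0 (v := 1 / 12) (by norm_num)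
  have hdev : Tendsto (fun n : ℕ => (a n - n / 2) / √n) atTop (𝓝 (1 / √12 * b)) := by
    refine tendsto_of_tendsto_of_monotone_of_strictMono
      (F := fun n t => volume (cornerA n (n / 2 + t * √n)))
      (fun n s t hst => measure_mono (cornerA_mono n (by gcongr)))
      (strictMono_measure_Iic (gaussianReal 0 (1 / 12))) tendsto_volume_cornerA ?_
    rw [hquantile]
    refine ha.congr' ?_
    filter_upwards [eventually_ge_atTop 1] with n hn
    have hsqrt : √(n : ℝ) ≠ 0 := by positivity
    rw [div_mul_cancel₀ _ hsqrt, add_sub_cancel]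
  rw [mul_assoc]
  exact (hdev.const_mul (-2)).congr fun n => by ring

end Limit

/-- If `a n` is chosen so that the corner simplex `Aₙ` has volume `ε ∈ (0,1/2)`, and `Bₙ`
is its reflection in the center of the cube, then `dist (Aₙ, Bₙ) = (n - 2 a n)/√n`, which
converges to `-2 σ Φ⁻¹(ε)` (σ = 1/√12); in particular the distance is bounded by a
constant depending only on `ε`. -/
theorem dist_corner_simplices (ε : ℝ) (hε : ε ∈ Set.Ioo (0 : ℝ) (1 / 2))
    (a : ℕ → ℝ)
    (ha : ∀ n ≥ 1, volume (cornerA n (a n)) = ENNReal.ofReal ε)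
    (b : ℝ) (hb : stdNormalCDF b = ε) :
    (∀ n ≥ 1, setDist (cornerA n (a n)) (cornerB n (a n))
        = ((n : ℝ) - 2 * a n) / Real.sqrt n) ∧
    Tendsto (fun n : ℕ => ((n : ℝ) - 2 * a n) / Real.sqrt n) atTop
      (nhds (-2 * (1 / Real.sqrt 12) * b)) ∧
    ∃ C : ℝ, ∀ n ≥ 1, setDist (cornerA n (a n)) (cornerB n (a n)) ≤ C := by
  have hdist : ∀ n ≥ 1, setDist (cornerA n (a n)) (cornerB n (a n))
      = ((n : ℝ) - 2 * a n) / Real.sqrt n := by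
    intro n hn
    have hA : (cornerA n (a n)).Nonempty :=
      nonempty_of_measure_ne_zero (μ := volume) (by simpa [ha n hn] using hε.1)
    refine setDist_cornerA_cornerB hA (le_of_not_ge fun h => ?_)
    have hvol := one_le_two_mul_volume_cornerA h
    rw [ha n hn, ← ENNReal.ofReal_ofNat, ← ENNReal.ofReal_mul zero_le_two,
      ENNReal.one_le_ofReal] at hvol
    linarith [hε.2]
  have hlim : Tendsto (fun n : ℕ => ((n : ℝ) - 2 * a n) / Real.sqrt n) atTop
      (nhds (-2 * (1 / Real.sqrt 12) * b)) := by
    refine tendsto_sub_two_mul_div_sqrt (tendsto_const_nhds.congr' ?_)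
    filter_upwards [eventually_ge_atTop 1] with n hn
    rw [ha n hn, hb]
  obtain ⟨C, hC⟩ := hlim.bddAbove_range
  exact ⟨hdist, hlim, C, fun n hn => (hdist n hn).trans_le (hC ⟨n, rfl⟩)⟩
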